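/- arXiv:1201.3315 — 4 statements merged into one kernel-verified Lean document; each statement's English description precedes it below -/
import Mathlib

section
/- Let α be a nonzero Lipschitz integer. Define right congruence modulo α on the Lipschitz integers by: q₁ ≡ᵣ q₂ if and only if q₁ − q₂ = δα for some Lipschitz integer δ. Then the set H(ℤ)_α of right-congruence classes of Lipschitz integers modulo α has exactly N(α)² elements. -/
open Quaternion

/-- The set `{δ * α : δ ∈ H(ℤ)}` of left multiples of a Lipschitz integer `α`,
as an additive subgroup of the Lipschitz integers `ℍ[ℤ]`.  Two Lipschitz integers
are right congruent modulo `α` iff their difference lies in this subgroup. -/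
def lipMultiples (α : ℍ[ℤ]) : AddSubgroup ℍ[ℤ] where
  carrier := Set.range (fun δ => δ * α)
  zero_mem' := ⟨0, zero_mul α⟩
  add_mem' := by rintro _ _ ⟨a, rfl⟩ ⟨b, rfl⟩; exact ⟨a + b, add_mul a b α⟩
  neg_mem' := by rintro _ ⟨a, rfl⟩; exact ⟨-a, neg_mul a α⟩

/-- `H(ℤ)_α`: the Lipschitz integers modulo right congruence modulo `α`. -/
abbrev LipMod (α : ℍ[ℤ]) := ℍ[ℤ] ⧸ lipMultiples α

/-- For a nonzero Lipschitz integer `α`, the set `H(ℤ)_α` of right-congruence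
classes of Lipschitz integers modulo `α` has exactly `N(α)²` elements. -/
theorem card_lipMod (α : ℍ[ℤ]) (hα : α ≠ 0) :
    (Nat.card (LipMod α) : ℤ) = (Quaternion.normSq α) ^ 2 := by
  let f : ℍ[ℤ] →ₗ[ℤ] ℍ[ℤ] := LinearMap.mulRight ℤ α
  have hf : Function.Injective f := fun x y h => mul_right_cancel₀ hα h
  let b : Module.Basis (Fin 4) ℤ ℍ[ℤ] := QuaternionAlgebra.basisOneIJK (-1 : ℤ) 0 (-1)
  have : Module.Free ℤ ℍ[ℤ] := Module.Free.of_basis b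
  have : Module.Finite ℤ ℍ[ℤ] := Module.Finite.of_basis b
  have hN : (LinearMap.range f).toAddSubgroup = lipMultiples α := by
    ext x; rfl
  have key := Submodule.natAbs_det_equiv (LinearMap.range f) (LinearEquiv.ofInjective f hf)
  have hc : (LinearMap.range f).subtype ∘ₗ
      AddMonoidHom.toIntLinearMap ((LinearEquiv.ofInjective f hf :
        ℍ[ℤ] ≃ₗ[ℤ] LinearMap.range f) : ℍ[ℤ] →+ LinearMap.range f) = f := by
    ext x <;> rfl
  rw [hc] at key
  have hdet : LinearMap.det f = (Quaternion.normSq α) ^ 2 := by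
    rw [← LinearMap.det_toMatrix b]
    have : LinearMap.toMatrix b b f = !![α.re, -α.imI, -α.imJ, -α.imK;
        α.imI, α.re, α.imK, -α.imJ;
        α.imJ, -α.imK, α.re, α.imI;
        α.imK, α.imJ, -α.imI, α.re] := by
      have hr : ∀ q : ℍ[ℤ], ⇑(b.repr q) = ![q.re, q.imI, q.imJ, q.imK] := fun _ => rfl
      have hb : ∀ j, ![(b j).re, (b j).imI, (b j).imJ, (b j).imK]
          = ⇑(Finsupp.single j (1 : ℤ)) := by
        intro j
        rw [← hr, Module.Basis.repr_self]
      have h0 : ∀ j, (b j).re = Finsupp.single j (1 : ℤ) 0 := fun j => congrFun (hb j) 0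
      have h1 : ∀ j, (b j).imI = Finsupp.single j (1 : ℤ) 1 := fun j => congrFun (hb j) 1
      have h2 : ∀ j, (b j).imJ = Finsupp.single j (1 : ℤ) 2 := fun j => congrFun (hb j) 2
      have h3 : ∀ j, (b j).imK = Finsupp.single j (1 : ℤ) 3 := fun j => congrFun (hb j) 3
      have hfa : ∀ q, f q = q * α := fun _ => rfl
      ext i j
      rw [LinearMap.toMatrix_apply, hr, hfa, Quaternion.re_mul, Quaternion.imI_mul,
        Quaternion.imJ_mul, Quaternion.imK_mul, h0, h1, h2, h3]
      fin_cases i <;> fin_cases j <;> simp [Finsupp.single_apply]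
    rw [this, Quaternion.normSq_def']
    simp [Matrix.det_succ_row_zero, Fin.sum_univ_succ, Fin.succAbove]
    ring
  have h2 : Nat.card (LipMod α) = (LinearMap.det f).natAbs := by
    rw [key]
    unfold LipMod
    rw [← hN]
    rfl
  rw [h2, hdet, Int.natAbs_of_nonneg (sq_nonneg _)]
end

section
/- Let π be a Gaussian prime with π·π̄ = p, where p ≡ 1 (mod 4) is a rational prime, and let n ≥ 1 and 1 ≤ k ≤ n. If C is an additive subgroup of G_π^n of cardinality p^k (an (n,k) linear code) that corrects all errors of Mannheim weight 1 or less, then p^{n−k} ≥ 4n + 1. -/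
/-- The Mannheim weight of a residue class `x ∈ G_π = ℤ[i]/(π)`: the least value
of `|a| + |b|` over all Gaussian integers `a + bi` in the class `x`. -/
noncomputable def mWt (π : GaussianInt) (x : GaussianInt ⧸ Ideal.span {π}) : ℕ :=
  sInf {m | ∃ a b : ℤ, Ideal.Quotient.mk (Ideal.span {π}) ⟨a, b⟩ = x ∧
    m = a.natAbs + b.natAbs}

/-- The Mannheim weight of a vector over `G_π` is the sum of the Mannheim
weights of its components. -/
noncomputable def mWtVec (π : GaussianInt) {n : ℕ}
    (v : Fin n → GaussianInt ⧸ Ideal.span {π}) : ℕ :=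
  ∑ i, mWt π (v i)

/-- A code `C ⊆ G_π^n` corrects all errors of Mannheim weight `t` or less:
any two distinct vectors of Mannheim weight at most `t` lie in distinct cosets of `C`. -/
def CorrectsM (π : GaussianInt) {n : ℕ}
    (C : AddSubgroup (Fin n → GaussianInt ⧸ Ideal.span {π})) (t : ℕ) : Prop :=
  ∀ u v : Fin n → GaussianInt ⧸ Ideal.span {π},
    mWtVec π u ≤ t → mWtVec π v ≤ t → u - v ∈ C → u = v

/-- The four units of the Gaussian integers. -/
def gUnit : Fin 4 → GaussianInt := ![⟨1, 0⟩, ⟨0, 1⟩, ⟨-1, 0⟩, ⟨0, -1⟩]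

theorem mk_zero_dvd_norm (π : GaussianInt) (p : ℕ) (hnorm : Zsqrtd.norm π = (p : ℤ))
    (d : GaussianInt) (h : Ideal.Quotient.mk (Ideal.span {π}) d = 0) :
    (p : ℤ) ∣ Zsqrtd.norm d := by
  rw [Ideal.Quotient.eq_zero_iff_mem, Ideal.mem_span_singleton] at h
  obtain ⟨e, rfl⟩ := h
  rw [Zsqrtd.norm_mul, hnorm]
  exact dvd_mul_right _ _

theorem gUnit_ne_zero (π : GaussianInt) (p : ℕ) (hp : p.Prime) (hnorm : Zsqrtd.norm π = (p : ℤ))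
    (j : Fin 4) : Ideal.Quotient.mk (Ideal.span {π}) (gUnit j) ≠ 0 := by
  intro h
  have h1 := mk_zero_dvd_norm π p hnorm _ h
  have h2 : Zsqrtd.norm (gUnit j) = 1 := by
    fin_cases j <;> simp [gUnit, Zsqrtd.norm_def]
  rw [h2] at h1
  have : p ∣ 1 := by exact_mod_cast h1
  exact hp.one_lt.ne' (Nat.dvd_one.mp this)

theorem gUnit_inj (π : GaussianInt) (p : ℕ) (hp : p.Prime) (hp4 : p % 4 = 1)
    (hnorm : Zsqrtd.norm π = (p : ℤ)) (j l : Fin 4)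
    (h : Ideal.Quotient.mk (Ideal.span {π}) (gUnit j) =
      Ideal.Quotient.mk (Ideal.span {π}) (gUnit l)) : j = l := by
  have h1 := mk_zero_dvd_norm π p hnorm (gUnit j - gUnit l) (by rw [map_sub, h, sub_self])
  by_contra hne
  have h2 : Zsqrtd.norm (gUnit j - gUnit l) ∣ 4 := by
    rw [Zsqrtd.norm_def]
    fin_cases j <;> fin_cases l <;> first | exact absurd rfl hne | (simp [gUnit]; try norm_num)
  have h3 : p ∣ 2 ^ 2 := by exact_mod_cast h1.trans h2
  have h4 := (Nat.prime_dvd_prime_iff_eq hp Nat.prime_two).mp (hp.dvd_of_dvd_pow h3)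
  omega

theorem mWt_le (π : GaussianInt) (g : GaussianInt) :
    mWt π (Ideal.Quotient.mk (Ideal.span {π}) g) ≤ g.re.natAbs + g.im.natAbs :=
  Nat.sInf_le ⟨g.re, g.im, rfl, rfl⟩

theorem mWt_zero' (π : GaussianInt) : mWt π 0 = 0 := by
  have := mWt_le π 0
  simpa using this

theorem quot_surj (π : GaussianInt) (p : ℕ) (hp : p.Prime)
    (hnorm : Zsqrtd.norm π = (p : ℤ)) :
    ∃ f : Fin p → GaussianInt ⧸ Ideal.span {π}, Function.Surjective f := by
  refine ⟨fun m => Ideal.Quotient.mk _ (((m : ℕ) : ℤ) : GaussianInt), ?_⟩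
  obtain ⟨a, b⟩ := π
  rw [Zsqrtd.norm_def] at hnorm
  simp only at hnorm
  have hpi : Prime (p : ℤ) := Nat.prime_iff_prime_int.mp hp
  have hp0 : (0 : ℤ) < p := by exact_mod_cast hp.pos
  have hb : ¬ (p : ℤ) ∣ b := by
    rintro hb
    have ha : (p : ℤ) ∣ a := by
      have : (p : ℤ) ∣ a * a := by
        have e : a * a = p - b * b := by linarith
        rw [e]
        exact dvd_sub dvd_rfl (hb.mul_right b)
      rcases hpi.dvd_or_dvd this with h | h <;> exact h
    have : (p : ℤ) * p ∣ p * 1 := by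
      have e : (p : ℤ) * 1 = a * a + b * b := by linarith
      rw [e]
      exact dvd_add (mul_dvd_mul ha ha) (mul_dvd_mul hb hb)
    have h1 := (mul_dvd_mul_iff_left hp0.ne').mp this
    exact hpi.not_isUnit (isUnit_of_dvd_one h1)
  have hcop : IsCoprime (p : ℤ) b := (Prime.coprime_iff_not_dvd hpi).mpr hb
  obtain ⟨s, c, hsc⟩ := hcop
  intro x
  obtain ⟨⟨y, z⟩, rfl⟩ := Ideal.Quotient.mk_surjective x
  have hmod := Int.emod_nonneg (y - a * c * z) hp0.ne'
  have hlt := Int.emod_lt_of_pos (y - a * c * z) hp0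
  refine ⟨⟨((y - a * c * z) % p).toNat, by omega⟩, ?_⟩
  simp only [Int.toNat_of_nonneg hmod]
  rw [Ideal.Quotient.eq, Ideal.mem_span_singleton]
  have e : (y - a * c * z) % p = y - a * c * z - p * ((y - a * c * z) / p) := by
    have := Int.emod_add_mul_ediv (y - a * c * z) p
    linarith
  rw [e]
  generalize (y - a * c * z) / p = q
  -- i ≡ -ac + s p i, p = π * conj π
  refine ⟨⟨-c * z, 0⟩ + ⟨a, -b⟩ * ⟨-q, -s * z⟩, ?_⟩
  have hp' : (p : ℤ) = a * a + b * b := by linarith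
  rw [hp'] at hsc ⊢
  rw [Zsqrtd.ext_iff]
  constructor
  · simp
    ring
  · simp
    linear_combination (z) * hsc

theorem quot_card (π : GaussianInt) (p : ℕ) (hp : p.Prime)
    (hnorm : Zsqrtd.norm π = (p : ℤ)) :
    Finite (GaussianInt ⧸ Ideal.span {π}) ∧ Nat.card (GaussianInt ⧸ Ideal.span {π}) ≤ p := by
  obtain ⟨f, hf⟩ := quot_surj π p hp hnorm
  refine ⟨Finite.of_surjective f hf, ?_⟩
  simpa using Nat.card_le_card_of_surjective f hf

/-- The error vectors of weight at most one. -/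
noncomputable def errVec (π : GaussianInt) (n : ℕ) :
    Option (Fin n × Fin 4) → Fin n → GaussianInt ⧸ Ideal.span {π}
  | none => 0
  | some (i, j) => Pi.single i (Ideal.Quotient.mk (Ideal.span {π}) (gUnit j))

theorem errVec_wt (π : GaussianInt) (n : ℕ) (e : Option (Fin n × Fin 4)) :
    mWtVec π (errVec π n e) ≤ 1 := by
  rcases e with _ | ⟨i, j⟩
  · simp [errVec, mWtVec, mWt_zero']
  · simp only [mWtVec, errVec]
    rw [Finset.sum_eq_single i]
    · rw [Pi.single_eq_same]
      refine (mWt_le π _).trans ?_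
      fin_cases j <;> simp [gUnit]
    · intro b _ hb
      rw [Pi.single_eq_of_ne hb, mWt_zero']
    · simp

theorem errVec_inj (π : GaussianInt) (p : ℕ) (hp : p.Prime) (hp4 : p % 4 = 1)
    (hnorm : Zsqrtd.norm π = (p : ℤ)) (n : ℕ) : Function.Injective (errVec π n) := by
  rintro (_ | ⟨i, j⟩) (_ | ⟨i', j'⟩) h
  · rfl
  · have := congrFun h i'
    simp only [errVec, Pi.single_eq_same, Pi.zero_apply] at this
    exact absurd this.symm (gUnit_ne_zero π p hp hnorm j')
  · have := congrFun h i
    simp only [errVec, Pi.single_eq_same, Pi.zero_apply] at this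
    exact absurd this (gUnit_ne_zero π p hp hnorm j)
  · have h1 := congrFun h i
    simp only [errVec, Pi.single_eq_same] at h1
    by_cases hi : i = i'
    · subst hi
      rw [Pi.single_eq_same] at h1
      rw [gUnit_inj π p hp hp4 hnorm j j' h1]
    · rw [Pi.single_eq_of_ne hi] at h1
      exact absurd h1 (gUnit_ne_zero π p hp hnorm j)

/-- An `(n, k)` linear code over `G_π` (`π` a Gaussian prime with `π·π̄ = p`,
`p ≡ 1 (mod 4)` a rational prime) correcting all errors of Mannheim weight 1
or less satisfies `p^(n-k) ≥ 4n + 1`. -/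
theorem sphere_packing_mannheim_wt_one (π : GaussianInt) (hπ : Prime π)
    (p : ℕ) (hp : p.Prime) (hp4 : p % 4 = 1) (hnorm : Zsqrtd.norm π = (p : ℤ))
    (n k : ℕ) (hn : 1 ≤ n) (hk : 1 ≤ k) (hkn : k ≤ n)
    (C : AddSubgroup (Fin n → GaussianInt ⧸ Ideal.span {π}))
    (hcard : Nat.card C = p ^ k)
    (hcorr : CorrectsM π C 1) :
    4 * n + 1 ≤ p ^ (n - k) := by
  obtain ⟨hfin, hle⟩ := quot_card π p hp hnorm
  have hinj : Function.Injective (fun e : Option (Fin n × Fin 4) =>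
      (QuotientAddGroup.mk (errVec π n e) : (Fin n → GaussianInt ⧸ Ideal.span {π}) ⧸ C)) := by
    intro e e' h
    apply errVec_inj π p hp hp4 hnorm n
    refine (hcorr _ _ (errVec_wt π n e') (errVec_wt π n e) ?_).symm
    have h2 := QuotientAddGroup.eq.mp h
    rwa [neg_add_eq_sub] at h2
  have h1 := Nat.card_le_card_of_injective _ hinj
  have h0 : Nat.card (Option (Fin n × Fin 4)) = 4 * n + 1 := by
    simp [Nat.card_eq_fintype_card, mul_comm]
  rw [h0] at h1
  refine h1.trans ?_
  have h2 := AddSubgroup.card_eq_card_quotient_mul_card_addSubgroup C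
  rw [hcard, Nat.card_fun, Nat.card_fin] at h2
  have h3 := Nat.pow_le_pow_left hle n
  rw [h2, ← pow_sub_mul_pow p hkn] at h3
  exact Nat.le_of_mul_le_mul_right h3 (pow_pos hp.pos k)
end

section
/- Let π = 2 + i, so that p = π·π̄ = 5, and let n ≥ 1 and 1 ≤ k ≤ n. If C is an additive subgroup of G_{2+i}^n of cardinality 5^k (an (n,k) linear code) that corrects all errors of Mannheim weight 2 or less, then 5^{n−k} ≥ 8n² − 4n + 1. -/
abbrev Q5 : Type := GaussianInt ⧸ Ideal.span {(⟨2, 1⟩ : GaussianInt)}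

def phi5 : GaussianInt →+* ZMod 5 := Zsqrtd.lift ⟨3, by decide⟩

lemma phi5_apply (a b : ℤ) : phi5 ⟨a, b⟩ = (a : ZMod 5) + b * 3 := by
  simp [phi5, Zsqrtd.lift]

lemma phi5_ker : RingHom.ker phi5 = Ideal.span {(⟨2, 1⟩ : GaussianInt)} := by
  ext ⟨a, b⟩
  rw [RingHom.mem_ker, Ideal.mem_span_singleton, phi5_apply]
  constructor
  · intro h
    have h' : ((a + b * 3 : ℤ) : ZMod 5) = 0 := by push_cast; exact h
    rw [ZMod.intCast_zmod_eq_zero_iff_dvd] at h'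
    obtain ⟨c, hc⟩ := h'
    refine ⟨⟨2 * c - b, b - c⟩, ?_⟩
    rw [Zsqrtd.ext_iff]
    simp only [Zsqrtd.re_mul, Zsqrtd.im_mul]
    push_cast at hc
    constructor <;> linarith
  · rintro ⟨z, hz⟩
    rw [← phi5_apply, hz, map_mul, phi5_apply]
    have : (((2 : ℤ) : ZMod 5) + ((1 : ℤ) : ZMod 5) * 3) = 0 := by decide
    rw [this, zero_mul]

lemma phi5_surj : Function.Surjective phi5 := by
  intro x
  refine ⟨⟨(x.val : ℤ), 0⟩, ?_⟩
  rw [phi5_apply]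
  simp

noncomputable def e5 : Q5 ≃+* ZMod 5 :=
  (Ideal.quotEquivOfEq phi5_ker.symm).trans (RingHom.quotientKerEquivOfSurjective phi5_surj)

lemma e5_mk (z : GaussianInt) : e5 (Ideal.Quotient.mk _ z) = phi5 z := rfl

lemma mWt_le_aux (x : Q5) (a b : ℤ) (h : phi5 ⟨a, b⟩ = e5 x) :
    mWt ⟨2, 1⟩ x ≤ a.natAbs + b.natAbs := by
  refine Nat.sInf_le ⟨a, b, ?_, rfl⟩
  apply e5.injective
  rw [e5_mk, h]

lemma mWt_zero : mWt ⟨2, 1⟩ (0 : Q5) = 0 := by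
  have := mWt_le_aux 0 0 0 (by rw [phi5_apply]; simp)
  simpa using this

lemma mWt_le_one (x : Q5) : mWt ⟨2, 1⟩ x ≤ 1 := by
  have key : ∀ y : ZMod 5, y = 0 ∨ y = 1 ∨ y = -1 ∨ y = 3 ∨ y = -3 := by decide
  rcases key (e5 x) with h | h | h | h | h
  · exact (mWt_le_aux x 0 0 (by rw [phi5_apply, h]; simp)).trans (by simp)
  · exact (mWt_le_aux x 1 0 (by rw [phi5_apply, h]; simp)).trans (by simp)
  · exact (mWt_le_aux x (-1) 0 (by rw [phi5_apply, h]; simp)).trans (by simp)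
  · exact (mWt_le_aux x 0 1 (by rw [phi5_apply, h]; simp)).trans (by simp)
  · exact (mWt_le_aux x 0 (-1) (by rw [phi5_apply, h]; simp)).trans (by simp)

open Classical in
lemma mWtVec_le {n : ℕ} (v : Fin n → Q5) (s : Finset (Fin n))
    (h : ∀ i, i ∉ s → v i = 0) : mWtVec ⟨2, 1⟩ v ≤ s.card := by
  unfold mWtVec
  rw [← Finset.sum_subset (Finset.subset_univ s)
    (fun i _ hi => by rw [h i hi]; exact mWt_zero)]
  calc _ ≤ ∑ i ∈ s, 1 := Finset.sum_le_sum (fun i _ => mWt_le_one (v i))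
    _ = s.card := by simp

noncomputable instance : Fintype Q5 := Fintype.ofEquiv _ e5.symm.toEquiv

lemma card_Q5 : Fintype.card Q5 = 5 := by
  rw [Fintype.card_congr e5.toEquiv, ZMod.card]

open Classical in
noncomputable def supp5 {n : ℕ} (s : Finset (Fin n)) : Finset (Fin n → Q5) :=
  Fintype.piFinset (fun i => if i ∈ s then Finset.univ.erase 0 else {0})

lemma mem_supp5 {n : ℕ} (s : Finset (Fin n)) (v : Fin n → Q5) :
    v ∈ supp5 s ↔ ∀ i, i ∈ s ↔ v i ≠ 0 := by
  classical
  rw [supp5, Fintype.mem_piFinset]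
  refine forall_congr' fun i => ?_
  by_cases h : i ∈ s <;> simp [h]

lemma card_supp5 {n : ℕ} (s : Finset (Fin n)) : (supp5 s).card = 4 ^ s.card := by
  classical
  rw [supp5, Fintype.card_piFinset]
  have : ∀ i, (if i ∈ s then (Finset.univ : Finset Q5).erase 0 else {0}).card
      = if i ∈ s then 4 else 1 := by
    intro i
    split_ifs
    · rw [Finset.card_erase_of_mem (Finset.mem_univ _), Finset.card_univ, card_Q5]
    · simp
  rw [Finset.prod_congr rfl (fun i _ => this i)]
  simp [Finset.prod_ite]

open Classical in
noncomputable def ball5 (n : ℕ) : Finset (Fin n → Q5) :=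
  (Finset.univ.filter (fun s : Finset (Fin n) => s.card < 3)).biUnion supp5

lemma card_ball5 (n : ℕ) : (ball5 n).card = 1 + n * 4 + n.choose 2 * 16 := by
  classical
  rw [ball5, Finset.card_biUnion]
  · simp only [card_supp5]
    rw [← Finset.sum_fiberwise_of_maps_to (t := Finset.range 3) (g := Finset.card)
      (fun s hs => by simpa using hs)]
    have : ∀ j ∈ Finset.range 3,
        ∑ s ∈ (Finset.univ.filter (fun s : Finset (Fin n) => s.card < 3)).filter
          (fun s => s.card = j), 4 ^ s.card = n.choose j * 4 ^ j := by
      intro j hj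
      have h1 : (Finset.univ.filter (fun s : Finset (Fin n) => s.card < 3)).filter
          (fun s => s.card = j) = Finset.powersetCard j Finset.univ := by
        ext s
        simp only [Finset.mem_filter, Finset.mem_univ, true_and, Finset.mem_powersetCard,
          Finset.subset_univ]
        rw [Finset.mem_range] at hj
        omega
      rw [h1, Finset.sum_congr rfl (g := fun _ => 4 ^ j)
        (fun s hs => by rw [(Finset.mem_powersetCard.1 hs).2])]
      simp
    rw [Finset.sum_congr rfl this]
    simp [Finset.sum_range_succ]
  · intro s _ t _ hst
    rw [Function.onFun, Finset.disjoint_left]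
    intro v hv hv'
    rw [mem_supp5] at hv hv'
    exact hst (Finset.ext fun i => (hv i).trans (hv' i).symm)

lemma mWtVec_ball5 {n : ℕ} {v : Fin n → Q5} (hv : v ∈ ball5 n) : mWtVec ⟨2, 1⟩ v ≤ 2 := by
  classical
  rw [ball5, Finset.mem_biUnion] at hv
  obtain ⟨s, hs, hv⟩ := hv
  rw [mem_supp5] at hv
  have := mWtVec_le v s (fun i hi => by_contra fun h => hi ((hv i).2 h))
  have h3 : s.card < 3 := by simpa using hs
  omega

/-- An `(n, k)` linear code over `G_{2+i}` (so `p = 5`) correcting all errors of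
Mannheim weight 2 or less satisfies `5^(n-k) ≥ 8n² − 4n + 1`. -/
theorem sphere_packing_mannheim_wt_two_2i
    (n k : ℕ) (hn : 1 ≤ n) (hk : 1 ≤ k) (hkn : k ≤ n)
    (C : AddSubgroup (Fin n → GaussianInt ⧸ Ideal.span {(⟨2, 1⟩ : GaussianInt)}))
    (hcard : Nat.card C = 5 ^ k)
    (hcorr : CorrectsM (⟨2, 1⟩ : GaussianInt) C 2) :
    8 * n ^ 2 - 4 * n + 1 ≤ 5 ^ (n - k) := by
  have hV : Nat.card (Fin n → Q5) = 5 ^ n := by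
    rw [Nat.card_eq_fintype_card, Fintype.card_fun, card_Q5, Fintype.card_fin]
  have hq : Nat.card ((Fin n → Q5) ⧸ C) = 5 ^ (n - k) := by
    have h := AddSubgroup.card_eq_card_quotient_mul_card_addSubgroup C
    rw [hcard] at h
    have h2 : 5 ^ n = 5 ^ (n - k) * 5 ^ k := by rw [← pow_add]; congr 1; omega
    exact Nat.eq_of_mul_eq_mul_right (pow_pos (by norm_num) k) (h.symm.trans (hV.trans h2))
  have hinj : Function.Injective
      (fun v : ball5 n => (QuotientAddGroup.mk v.1 : (Fin n → Q5) ⧸ C)) := by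
    rintro ⟨u, hu⟩ ⟨v, hv⟩ h
    have h1 : -v + u ∈ C := QuotientAddGroup.eq.1 h.symm
    refine Subtype.ext (hcorr u v (mWtVec_ball5 hu) (mWtVec_ball5 hv) ?_)
    rwa [sub_eq_neg_add]
  have hle := Nat.card_le_card_of_injective _ hinj
  rw [hq, Nat.card_eq_fintype_card, Fintype.card_coe, card_ball5] at hle
  refine le_trans ?_ hle
  have hc : n.choose 2 * 2 = n * (n - 1) := by
    rw [Nat.choose_two_right]
    exact Nat.div_mul_cancel (Nat.even_mul_pred_self n).two_dvd
  obtain ⟨m, rfl⟩ : ∃ m, n = m + 1 := ⟨n - 1, by omega⟩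
  rw [Nat.add_sub_cancel] at hc
  have h8 : 8 * (m + 1) ^ 2 = 8 * ((m + 1) * m) + 8 * (m + 1) := by ring
  omega
end

section
/- There exists a perfect (6,4) linear code over G_{2+i} correcting all errors of Mannheim weight 1: namely, the null space C = {x ∈ G_{2+i}^6 : Hxᵀ = 0} of the parity check matrix H = [[1, 0, 1, 1, i, 1], [0, 1, 1, −1, 1, i]] over G_{2+i} is a subgroup of cardinality 5⁴ with index 5² = 25, and the 4·6 + 1 = 25 vectors of G_{2+i}^6 of Mannheim weight at most 1 lie in pairwise distinct cosets of C; in particular C corrects all errors of Mannheim weight 1 and attains the sphere-packing bound 5^{6−4} = 4·6 + 1 with equality. -/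
/-- The residue class ring `G_{2+i} = ℤ[i]/(2+i)`, which has 5 elements. -/
abbrev Gq : Type := GaussianInt ⧸ Ideal.span {(⟨2, 1⟩ : GaussianInt)}

/-- The class of `i` in `G_{2+i}`. -/
noncomputable def iq : Gq :=
  Ideal.Quotient.mk (Ideal.span {(⟨2, 1⟩ : GaussianInt)}) ⟨0, 1⟩

/-- The parity check matrix `H = [[1, 0, 1, 1, i, 1], [0, 1, 1, −1, 1, i]]`
over `G_{2+i}`. -/
noncomputable def pcMatrix : Matrix (Fin 2) (Fin 6) Gq :=
  !![1, 0, 1, 1, iq, 1; 0, 1, 1, -1, 1, iq]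

/-- The null space `C = {x : H xᵀ = 0}` of the parity check matrix, as an
additive subgroup of `G_{2+i}^6`. -/
noncomputable def nullCode : AddSubgroup (Fin 6 → Gq) :=
  (LinearMap.ker pcMatrix.mulVecLin).toAddSubgroup

/-- Reduction `ℤ[i] → ℤ/5` sending `i` to `3`. -/
def redHom : GaussianInt →+* ZMod 5 := Zsqrtd.lift ⟨(3 : ZMod 5), by decide⟩

lemma redHom_apply (a b : ℤ) : redHom ⟨a, b⟩ = (a : ZMod 5) + b * 3 := by
  simp [redHom, Zsqrtd.lift]

lemma redHom_eq_zero_iff (z : GaussianInt) :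
    redHom z = 0 ↔ z ∈ Ideal.span {(⟨2, 1⟩ : GaussianInt)} := by
  obtain ⟨a, b⟩ := z
  rw [redHom_apply, Ideal.mem_span_singleton]
  have h1 : (a : ZMod 5) + b * 3 = ((a + b * 3 : ℤ) : ZMod 5) := by push_cast; ring
  rw [h1, ZMod.intCast_zmod_eq_zero_iff_dvd]
  constructor
  · rintro ⟨k, hk⟩
    refine ⟨⟨2 * k - b, b - k⟩, ?_⟩
    have hk' : a + b * 3 = 5 * k := by simpa using hk
    ext
    · simp; omega
    · simp; ring
  · rintro ⟨⟨c, d⟩, h⟩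
    have hr := congrArg Zsqrtd.re h
    have hi := congrArg Zsqrtd.im h
    simp at hr hi
    refine ⟨c + d, ?_⟩
    push_cast
    omega

/-- The induced map on the quotient. -/
noncomputable def eq5 : Gq →+* ZMod 5 :=
  Ideal.Quotient.lift _ redHom (fun z hz => (redHom_eq_zero_iff z).2 hz)

lemma eq5_mk (z : GaussianInt) : eq5 (Ideal.Quotient.mk _ z) = redHom z := rfl

lemma eq5_inj : Function.Injective eq5 := by
  rw [injective_iff_map_eq_zero]
  intro x hx
  obtain ⟨z, rfl⟩ := Ideal.Quotient.mk_surjective x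
  rw [eq5_mk, redHom_eq_zero_iff] at hx
  exact Ideal.Quotient.eq_zero_iff_mem.2 hx

lemma eq5_surj : Function.Surjective eq5 := by
  intro y
  refine ⟨Ideal.Quotient.mk _ ⟨y.val, 0⟩, ?_⟩
  rw [eq5_mk, redHom_apply]
  simp

lemma eq5_iq : eq5 iq = 3 := by
  rw [iq, eq5_mk, redHom_apply]; simp

open Classical in
lemma mWt_eq (x : Gq) : mWt ⟨2, 1⟩ x = if x = 0 then 0 else 1 := by
  have key : ∀ a b : ℤ, redHom ⟨a, b⟩ = eq5 x →
      mWt ⟨2, 1⟩ x ≤ a.natAbs + b.natAbs := by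
    intro a b h
    exact Nat.sInf_le ⟨a, b, eq5_inj h, rfl⟩
  split_ifs with h
  · subst h
    simpa using key 0 0 (by rw [redHom_apply]; simp)
  · apply le_antisymm
    · have h5 : ∀ y : ZMod 5, y ≠ 0 → y = 1 ∨ y = -1 ∨ y = 3 ∨ y = -3 := by decide
      have hx : eq5 x ≠ 0 := fun h0 => h (eq5_inj (by simpa using h0))
      rcases h5 _ hx with h | h | h | h
      · simpa using key 1 0 (by rw [redHom_apply, h]; simp)
      · simpa using key (-1) 0 (by rw [redHom_apply, h]; simp)
      · simpa using key 0 1 (by rw [redHom_apply, h]; simp)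
      · simpa using key 0 (-1) (by rw [redHom_apply, h]; simp)
    · rw [Nat.one_le_iff_ne_zero]
      intro h0
      rw [mWt, Nat.sInf_eq_zero] at h0
      rcases h0 with ⟨a, b, hab, h0⟩ | h0
      · have ha : a = 0 := by omega
        have hb : b = 0 := by omega
        subst ha hb
        exact h (hab.symm.trans (map_zero (Ideal.Quotient.mk _)))
      · obtain ⟨z, hz⟩ := Ideal.Quotient.mk_surjective x
        have : z.re.natAbs + z.im.natAbs ∈ (∅ : Set ℕ) := by
          rw [← h0]; exact ⟨z.re, z.im, hz, rfl⟩
        exact this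

open Classical in
lemma mWtVec_le_one_iff (v : Fin 6 → Gq) :
    mWtVec ⟨2, 1⟩ v ≤ 1 ↔ ∃ i c, v = Pi.single i c := by
  simp only [mWtVec, mWt_eq]
  constructor
  · intro h
    by_cases h0 : v = 0
    · exact ⟨0, 0, by simp [h0]⟩
    · obtain ⟨i, hi⟩ := Function.ne_iff.1 h0
      refine ⟨i, v i, ?_⟩
      funext j
      by_cases hj : j = i
      · subst hj; simp
      · rw [Pi.single_eq_of_ne hj]
        by_contra hvj
        have h2 := Finset.sum_le_sum_of_subset
          (f := fun k => if v k = 0 then 0 else 1) (Finset.subset_univ {j, i})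
        rw [Finset.sum_pair hj] at h2
        have hi' : v i ≠ 0 := hi
        simp only [hvj, hi', if_false] at h2
        omega
  · rintro ⟨i, c, rfl⟩
    rw [Finset.sum_eq_single i]
    · split_ifs <;> simp
    · intro j _ hj; simp [Pi.single_eq_of_ne hj]
    · simp

/-- The parity check matrix over `ℤ/5`. -/
def pc5 : Matrix (Fin 2) (Fin 6) (ZMod 5) :=
  !![1, 0, 1, 1, 3, 1; 0, 1, 1, -1, 1, 3]

lemma pc5_eq (i : Fin 2) (j : Fin 6) : eq5 (pcMatrix i j) = pc5 i j := by
  fin_cases i <;> fin_cases j <;> simp [pcMatrix, pc5, eq5_iq]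

/-- The syndrome map. -/
noncomputable def syn : (Fin 6 → Gq) →+ (Fin 2 → ZMod 5) where
  toFun v i := eq5 (pcMatrix.mulVecLin v i)
  map_zero' := by funext i; simp
  map_add' u v := by funext i; simp [Matrix.mulVec_add]

lemma syn_ker : syn.ker = nullCode := by
  ext v
  rw [AddMonoidHom.mem_ker]
  change _ ↔ pcMatrix.mulVecLin v = 0
  constructor
  · intro h
    funext i
    exact eq5_inj ((congrFun h i).trans (map_zero eq5).symm)
  · intro h
    funext i
    change eq5 (pcMatrix.mulVecLin v i) = 0
    rw [h]; simp

lemma syn_single (j : Fin 6) (c : Gq) :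
    syn (Pi.single j c) = fun i => pc5 i j * eq5 c := by
  funext i
  change eq5 (pcMatrix.mulVecLin (Pi.single j c) i) = _
  rw [Matrix.mulVecLin_apply, Matrix.mulVec_single, ← pc5_eq]
  simp

lemma pc5_cover : ∀ s t : ZMod 5, ∃ (j : Fin 6) (c : ZMod 5),
    pc5 0 j * c = s ∧ pc5 1 j * c = t := by decide

set_option maxRecDepth 100000 in
lemma pc5_sep : ∀ (j k : Fin 6) (a b : ZMod 5),
    pc5 0 j * a = pc5 0 k * b → pc5 1 j * a = pc5 1 k * b →
    (j = k ∧ a = b) ∨ (a = 0 ∧ b = 0) := by decide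

lemma syn_cover (s : Fin 2 → ZMod 5) : ∃ (j : Fin 6) (c : Gq), syn (Pi.single j c) = s := by
  obtain ⟨j, c, h0, h1⟩ := pc5_cover (s 0) (s 1)
  obtain ⟨d, rfl⟩ := eq5_surj c
  refine ⟨j, d, ?_⟩
  rw [syn_single]
  funext i
  fin_cases i
  · exact h0
  · exact h1

lemma syn_sep (u v : Fin 6 → Gq) (hu : mWtVec ⟨2, 1⟩ u ≤ 1) (hv : mWtVec ⟨2, 1⟩ v ≤ 1)
    (h : syn u = syn v) : u = v := by
  obtain ⟨j, a, rfl⟩ := (mWtVec_le_one_iff u).1 hu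
  obtain ⟨k, b, rfl⟩ := (mWtVec_le_one_iff v).1 hv
  rw [syn_single, syn_single] at h
  rcases pc5_sep j k _ _ (congrFun h 0) (congrFun h 1) with ⟨rfl, hab⟩ | ⟨ha, hb⟩
  · rw [eq5_inj hab]
  · rw [eq5_inj (ha.trans (map_zero eq5).symm), eq5_inj (hb.trans (map_zero eq5).symm)]
    simp

lemma nullCode_index : nullCode.index = 5 ^ 2 := by
  have hs : Function.Surjective syn := fun s => by
    obtain ⟨j, c, h⟩ := syn_cover s
    exact ⟨_, h⟩
  rw [← syn_ker, AddSubgroup.index_ker, AddMonoidHom.range_eq_top.2 hs]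
  rw [Nat.card_congr AddSubgroup.topEquiv.toEquiv]
  simp

lemma card_vec : Nat.card (Fin 6 → Gq) = 5 ^ 6 := by
  have h : Nat.card Gq = 5 := by
    rw [Nat.card_congr (Equiv.ofBijective eq5 ⟨eq5_inj, eq5_surj⟩)]; simp
  rw [Nat.card_fun, h]; simp

/-- The null space of `H = [[1, 0, 1, 1, i, 1], [0, 1, 1, −1, 1, i]]` over
`G_{2+i}` is a perfect `(6, 4)` linear code correcting all errors of Mannheim
weight 1: it has `5⁴` elements and index `5² = 25`, there are exactly
`4·6 + 1 = 25` vectors of `G_{2+i}⁶` of Mannheim weight at most 1 and they lie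
in pairwise distinct cosets of the code, and the sphere-packing bound
`5^(6−4) = 4·6 + 1` is attained with equality. -/
theorem perfect_code_six_four :
    Nat.card nullCode = 5 ^ 4 ∧
    nullCode.index = 5 ^ 2 ∧
    Nat.card {v : Fin 6 → Gq // mWtVec (⟨2, 1⟩ : GaussianInt) v ≤ 1} = 4 * 6 + 1 ∧
    CorrectsM (⟨2, 1⟩ : GaussianInt) nullCode 1 ∧
    5 ^ (6 - 4) = 4 * 6 + 1 := by
  refine ⟨?_, nullCode_index, ?_, ?_, by norm_num⟩
  · have h := nullCode.card_mul_index
    rw [nullCode_index, card_vec] at h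
    omega
  · have hb : Function.Bijective
        (fun v : {v : Fin 6 → Gq // mWtVec (⟨2, 1⟩ : GaussianInt) v ≤ 1} => syn v.1) := by
      constructor
      · intro u v h
        exact Subtype.ext (syn_sep _ _ u.2 v.2 h)
      · intro s
        obtain ⟨j, c, h⟩ := syn_cover s
        exact ⟨⟨_, (mWtVec_le_one_iff _).2 ⟨j, c, rfl⟩⟩, h⟩
    rw [Nat.card_congr (Equiv.ofBijective _ hb)]
    simp
  · intro u v hu hv h
    rw [← syn_ker, AddMonoidHom.mem_ker, map_sub, sub_eq_zero] at h
    exact syn_sep u v hu hv h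
end
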